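/- (Costa's entropy power inequality, concavity form) For every a > 0, the entropy power N(a) = (1/(2πe)) exp(2h(a)) of the output of the additive Gaussian noise channel is twice differentiable in a and d²/da² N(a) = −N(a) · ∫ f_Y(y;a) ( J(a) + ∂/∂y S_Y(y;a) )² dy ≤ 0; in particular a ↦ N(a) is concave, where h(a) = −∫ f_Y(y;a) log f_Y(y;a) dy, S_Y(y;a) = ∂/∂y log f_Y(y;a), and J(a) = ∫ f_Y(y;a) S_Y(y;a)² dy. -/

import Mathlib

open MeasureTheory Filter

/-!
The density `f` of `Y = X + √a W` solves the heat equation `∂ₐ f = f'' / 2`. Differentiating under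
the integral sign and integrating by parts in `y` gives de Bruijn's identity `h' = J / 2` and then
`J' = -E[S'(Y) ^ 2]`, while `E[S'(Y)] = -J`. Hence `N' = N J` and
`N'' = N (J ^ 2 - E[S'(Y) ^ 2]) = -N E[(J + S'(Y)) ^ 2]`, a variance up to the factor `-N`.

The integrands are products `f * ∏ᵢ (f⁽ᵏⁱ⁾ / f)`, possibly times `log f`, and have to be dominated
locally uniformly in `a` by integrable functions in spite of the denominators. Each `f⁽ᵏ⁾ / f` is
bounded by the average of `C (1 + |y - x|) ^ k` over the conditional law of `X` given `Y = y`; by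
Chebyshev's association inequality a product of such averages is at most the average of the
product, so that the total integrand is at most the convolution of the law of `X` with a polynomial
times a Gaussian. Jensen's inequality bounds `log f` by a quadratic polynomial.
-/

namespace GaussianChannel

open scoped Topology

/-- The family `Φ` is locally dominated at the parameter `a`: for all parameters near `a` the
functions `Φ b` are measurable and bounded by one common integrable function. This is what
differentiation under the integral sign requires of both the integrand and its derivative. -/
def DominatedNear {α ι : Type*} [MeasurableSpace α] [TopologicalSpace ι]
    (Φ : ι → α → ℝ) (ν : Measure α) (a : ι) : Prop :=
  ∃ D : α → ℝ, Integrable D ν ∧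
    ∀ᶠ b in 𝓝 a, AEStronglyMeasurable (Φ b) ν ∧ ∀ y, |Φ b y| ≤ D y

namespace DominatedNear

variable {α ι : Type*} [MeasurableSpace α] [TopologicalSpace ι] {ν : Measure α}
  {Φ Ψ : ι → α → ℝ} {a : ι}

lemma integrable (hΦ : DominatedNear Φ ν a) : Integrable (Φ a) ν := by
  obtain ⟨D, hD, hΦD⟩ := hΦ
  obtain ⟨hmeas, hle⟩ := hΦD.self_of_nhds
  exact hD.mono' hmeas (ae_of_all _ hle)

lemma add (hΦ : DominatedNear Φ ν a) (hΨ : DominatedNear Ψ ν a) :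
    DominatedNear (fun b y ↦ Φ b y + Ψ b y) ν a := by
  obtain ⟨D, hD, hΦD⟩ := hΦ
  obtain ⟨E, hE, hΨE⟩ := hΨ
  refine ⟨fun y ↦ D y + E y, hD.add hE, ?_⟩
  filter_upwards [hΦD, hΨE] with b ⟨hmΦ, hleΦ⟩ ⟨hmΨ, hleΨ⟩
  exact ⟨hmΦ.add hmΨ, fun y ↦ (abs_add_le _ _).trans (add_le_add (hleΦ y) (hleΨ y))⟩

lemma const_mul (c : ℝ) (hΦ : DominatedNear Φ ν a) :
    DominatedNear (fun b y ↦ c * Φ b y) ν a := by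
  obtain ⟨D, hD, hΦD⟩ := hΦ
  refine ⟨fun y ↦ |c| * D y, hD.const_mul _, ?_⟩
  filter_upwards [hΦD] with b ⟨hm, hle⟩
  refine ⟨hm.const_mul c, fun y ↦ ?_⟩
  rw [abs_mul]
  gcongr
  exact hle y

lemma sub (hΦ : DominatedNear Φ ν a) (hΨ : DominatedNear Ψ ν a) :
    DominatedNear (fun b y ↦ Φ b y - Ψ b y) ν a := by
  simpa only [neg_one_mul, ← sub_eq_add_neg] using hΦ.add (hΨ.const_mul (-1))

lemma hasDerivAt_integral {Φ Φ' : ℝ → α → ℝ} {a : ℝ} (hΦ : DominatedNear Φ ν a)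
    (hΦ' : DominatedNear Φ' ν a)
    (hderiv : ∀ᶠ b in 𝓝 a, ∀ y, HasDerivAt (fun b ↦ Φ b y) (Φ' b y) b) :
    HasDerivAt (fun b ↦ ∫ y, Φ b y ∂ν) (∫ y, Φ' a y ∂ν) a := by
  have hint := hΦ.integrable
  have hint' := hΦ'.integrable
  obtain ⟨_, _, hmeas⟩ := hΦ
  obtain ⟨D, hD, hΦ'D⟩ := hΦ'
  exact (hasDerivAt_integral_of_dominated_loc_of_deriv_le (hΦ'D.and hderiv)
    (hmeas.mono fun _ h ↦ h.1) hint hint'.aestronglyMeasurable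
    (ae_of_all _ fun y _ hb ↦ hb.1.2 y) hD (ae_of_all _ fun y _ hb ↦ hb.2 y)).2

end DominatedNear

/-- Chebyshev's association inequality: expand
`0 ≤ ∬ g(x) g(x') (u(x) - u(x')) (v(x) - v(x'))`. -/
lemma integral_mul_integral_le_of_monovary {α : Type*} [MeasurableSpace α] {ν : Measure α}
    [SFinite ν] {g u v : α → ℝ} (hg : 0 ≤ g) (huv : Monovary u v) (hig : Integrable g ν)
    (hiu : Integrable (fun x ↦ u x * g x) ν) (hiv : Integrable (fun x ↦ v x * g x) ν)
    (hiuv : Integrable (fun x ↦ u x * v x * g x) ν) :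
    (∫ x, u x * g x ∂ν) * ∫ x, v x * g x ∂ν ≤ (∫ x, g x ∂ν) * ∫ x, u x * v x * g x ∂ν := by
  have hle := integral_mono ((hiu.mul_prod hiv).add (hiv.mul_prod hiu))
    ((hig.mul_prod hiuv).add (hiuv.mul_prod hig)) fun z ↦ by
      have := mul_nonneg (mul_nonneg (hg z.1) (hg z.2))
        (monovary_iff_forall_mul_nonneg.1 huv z.1 z.2)
      simp only [Pi.add_apply]
      linarith
  rw [integral_add' (hiu.mul_prod hiv) (hiv.mul_prod hiu),
    integral_add' (hig.mul_prod hiuv) (hiuv.mul_prod hig),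
    integral_prod_mul (fun x ↦ u x * g x) fun x ↦ v x * g x,
    integral_prod_mul (fun x ↦ v x * g x) fun x ↦ u x * g x,
    integral_prod_mul g fun x ↦ u x * v x * g x,
    integral_prod_mul (fun x ↦ u x * v x * g x) g] at hle
  linarith

/-- The density of the centred normal law of variance `a`, with real parameter `a` so that it can
be differentiated in the variance. -/
noncomputable def gaussianKernel (a z : ℝ) : ℝ :=
  (√(2 * Real.pi * a))⁻¹ * Real.exp (-z ^ 2 / (2 * a))

/-- The `k`-th derivative of `gaussianKernel a`. Its recursion is the identity `a g' = -z g`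
differentiated `k + 1` times. -/
noncomputable def gaussianDeriv (a : ℝ) : ℕ → ℝ → ℝ
  | 0, z => gaussianKernel a z
  | 1, z => -(z / a) * gaussianKernel a z
  | k + 2, z => -(z * gaussianDeriv a (k + 1) z + (k + 1) * gaussianDeriv a k z) / a

lemma gaussianKernel_nonneg (a z : ℝ) : 0 ≤ gaussianKernel a z := by
  unfold gaussianKernel
  positivity

section Kernel

variable {a : ℝ}

lemma gaussianKernel_pos (ha : 0 < a) (z : ℝ) : 0 < gaussianKernel a z := by
  unfold gaussianKernel
  positivity

lemma gaussianKernel_eq_gaussianPDFReal (ha : 0 ≤ a) :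
    gaussianKernel a = ProbabilityTheory.gaussianPDFReal 0 ⟨a, ha⟩ := by
  ext z
  simp only [gaussianKernel, ProbabilityTheory.gaussianPDFReal, sub_zero]
  rfl

lemma integrable_gaussianKernel (ha : 0 ≤ a) : Integrable (gaussianKernel a) :=
  gaussianKernel_eq_gaussianPDFReal ha ▸ ProbabilityTheory.integrable_gaussianPDFReal 0 _

lemma integral_gaussianKernel (ha : 0 < a) : ∫ z, gaussianKernel a z = 1 := by
  rw [gaussianKernel_eq_gaussianPDFReal ha.le]
  exact ProbabilityTheory.integral_gaussianPDFReal_eq_one 0 (NNReal.coe_ne_zero.1 ha.ne')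

lemma hasDerivAt_gaussianKernel_left (ha : 0 < a) (z : ℝ) :
    HasDerivAt (fun a ↦ gaussianKernel a z) (gaussianDeriv a 2 z / 2) a := by
  have hexponent : HasDerivAt (fun a : ℝ ↦ -z ^ 2 / (2 * a)) (z ^ 2 / (2 * a ^ 2)) a := by
    refine ((hasDerivAt_const a (-z ^ 2)).div ((hasDerivAt_id a).const_mul 2)
      (by positivity)).congr_deriv ?_
    simp only [id]
    field_simp
    ring
  have hfactor : HasDerivAt (fun a : ℝ ↦ (√(2 * Real.pi * a))⁻¹)
      (-(1 / (2 * a)) * (√(2 * Real.pi * a))⁻¹) a := by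
    refine ((((hasDerivAt_id a).const_mul (2 * Real.pi)).sqrt (by positivity)).inv
      (by positivity)).congr_deriv ?_
    simp only [id]
    rw [Real.sq_sqrt (by positivity)]
    field_simp
  refine (hfactor.mul hexponent.exp).congr_deriv ?_
  simp only [gaussianDeriv, gaussianKernel]
  field_simp
  push_cast
  ring

lemma hasDerivAt_gaussianDeriv_right (ha : 0 < a) :
    ∀ (k : ℕ) (z : ℝ), HasDerivAt (gaussianDeriv a k) (gaussianDeriv a (k + 1) z) z
  | 0, z => by
    have hexponent : HasDerivAt (fun z : ℝ ↦ -z ^ 2 / (2 * a)) (-(z / a)) z :=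
      ((hasDerivAt_pow 2 z).neg.div_const (2 * a)).congr_deriv (by field_simp; simp)
    exact (hexponent.exp.const_mul _).congr_deriv (by
      simp only [gaussianDeriv, gaussianKernel]
      ring)
  | 1, z => by
    have hprod := ((hasDerivAt_id z).div_const a).neg.mul (hasDerivAt_gaussianDeriv_right ha 0 z)
    refine hprod.congr_deriv ?_
    simp only [gaussianDeriv, Pi.neg_apply, id]
    field_simp
    push_cast
    ring
  | k + 2, z => by
    have hprod := ((hasDerivAt_id z).mul (hasDerivAt_gaussianDeriv_right ha (k + 1) z)).add
      ((hasDerivAt_gaussianDeriv_right ha k z).const_mul (k + 1 : ℝ))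
    refine (hprod.neg.div_const a).congr_deriv ?_
    simp only [gaussianDeriv, id]
    push_cast
    ring

lemma hasDerivAt_gaussianDeriv_left (ha : 0 < a) (z : ℝ) :
    ∀ k : ℕ, HasDerivAt (fun a ↦ gaussianDeriv a k z) (gaussianDeriv a (k + 2) z / 2) a
  | 0 => hasDerivAt_gaussianKernel_left ha z
  | 1 => by
    have hprod := ((hasDerivAt_const a z).div (hasDerivAt_id a) ha.ne').neg.mul
      (hasDerivAt_gaussianKernel_left ha z)
    refine hprod.congr_deriv ?_
    simp only [gaussianDeriv, Pi.neg_apply, Pi.div_apply, id]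
    field_simp
    push_cast
    ring
  | k + 2 => by
    have hprod := ((hasDerivAt_gaussianDeriv_left ha z (k + 1)).const_mul z).add
      ((hasDerivAt_gaussianDeriv_left ha z k).const_mul (k + 1 : ℝ))
    refine (hprod.neg.div (hasDerivAt_id a) ha.ne').congr_deriv ?_
    simp only [gaussianDeriv, Pi.neg_apply, Pi.add_apply, id]
    field_simp
    push_cast
    ring

lemma continuous_gaussianDeriv (ha : 0 < a) (k : ℕ) : Continuous (gaussianDeriv a k) :=
  continuous_iff_continuousAt.2 fun z ↦ (hasDerivAt_gaussianDeriv_right ha k z).continuousAt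

lemma continuous_gaussianKernel (ha : 0 < a) : Continuous (gaussianKernel a) :=
  continuous_gaussianDeriv ha 0

lemma exists_abs_gaussianDeriv_le {b : ℝ} (hb : 0 < b) :
    ∀ k : ℕ, ∃ C ≥ 0, ∀ a ≥ b, ∀ z,
      |gaussianDeriv a k z| ≤ C * ((1 + |z|) ^ k * gaussianKernel a z)
  | 0 => ⟨1, zero_le_one, fun a _ z ↦ by
      simp [gaussianDeriv, abs_of_nonneg (gaussianKernel_nonneg a z)]⟩
  | 1 => ⟨1 / b, by positivity, fun a ha z ↦ by
      have hz : |z| ≤ 1 + |z| := by linarith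
      have hg := gaussianKernel_nonneg a z
      have ha' : 0 < a := hb.trans_le ha
      simp only [gaussianDeriv, abs_mul, abs_neg, abs_div, abs_of_nonneg hg, abs_of_pos ha',
        pow_one]
      calc |z| / a * gaussianKernel a z ≤ (1 + |z|) / b * gaussianKernel a z := by gcongr
        _ = 1 / b * ((1 + |z|) * gaussianKernel a z) := by ring⟩
  | k + 2 => by
    obtain ⟨C₁, hC₁, h₁⟩ := exists_abs_gaussianDeriv_le hb (k + 1)
    obtain ⟨C₀, hC₀, h₀⟩ := exists_abs_gaussianDeriv_le hb k
    refine ⟨(C₁ + (k + 1) * C₀) / b, by positivity, fun a ha z ↦ ?_⟩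
    have hz : |z| ≤ 1 + |z| := by linarith
    have hpow : (1 + |z|) ^ k ≤ (1 + |z|) ^ (k + 2) := pow_le_pow_right₀ (by simp) (by omega)
    have hg := gaussianKernel_nonneg a z
    have ha' : 0 < a := hb.trans_le ha
    have hk : |(k + 1 : ℝ)| = k + 1 := abs_of_pos (by positivity)
    calc |gaussianDeriv a (k + 2) z|
        = |z * gaussianDeriv a (k + 1) z + (k + 1) * gaussianDeriv a k z| / a := by
          rw [gaussianDeriv, abs_div, abs_neg, abs_of_pos ha']
      _ ≤ (|z| * |gaussianDeriv a (k + 1) z| + (k + 1) * |gaussianDeriv a k z|) / b := by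
          gcongr
          exact (abs_add_le _ _).trans_eq (by rw [abs_mul, abs_mul, hk])
      _ ≤ ((1 + |z|) * (C₁ * ((1 + |z|) ^ (k + 1) * gaussianKernel a z))
            + (k + 1) * (C₀ * ((1 + |z|) ^ (k + 2) * gaussianKernel a z))) / b := by
          gcongr
          · exact h₁ a ha z
          · exact (h₀ a ha z).trans (by gcongr)
      _ = (C₁ + (k + 1) * C₀) / b * ((1 + |z|) ^ (k + 2) * gaussianKernel a z) := by ring

lemma one_add_abs_pow_le_exp {c : ℝ} (hc : 0 < c) (n : ℕ) (z : ℝ) :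
    (1 + |z|) ^ n ≤ n.factorial * Real.exp (1 + 1 / (4 * c)) * Real.exp (c * z ^ 2) := by
  have hpow := Real.pow_div_factorial_le_exp (1 + |z|) (by positivity) n
  rw [div_le_iff₀' (by positivity)] at hpow
  have habs : |z| ≤ 1 / (4 * c) + c * z ^ 2 := by
    rw [← sq_abs, ← sub_nonneg]
    have hsq : 1 / (4 * c) + c * |z| ^ 2 - |z| = c * (|z| - 1 / (2 * c)) ^ 2 := by
      field_simp
      ring
    rw [hsq]
    positivity
  calc (1 + |z|) ^ n ≤ n.factorial * Real.exp (1 + |z|) := hpow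
    _ ≤ n.factorial * Real.exp (1 + 1 / (4 * c) + c * z ^ 2) := by gcongr ?_ * Real.exp ?_; linarith
    _ = _ := by rw [Real.exp_add (1 + 1 / (4 * c))]; ring

lemma exists_one_add_abs_pow_mul_gaussianKernel_le (ha : 0 < a) (n : ℕ) :
    ∃ C, ∃ c > 0, ∀ᶠ b in 𝓝 a, ∀ z,
      (1 + |z|) ^ n * gaussianKernel b z ≤ C * Real.exp (-c * z ^ 2) := by
  set c := 1 / (8 * a) with hc
  have hc0 : 0 < c := by positivity
  refine ⟨n.factorial * Real.exp (1 + 1 / (4 * c)) * (√(Real.pi * a))⁻¹, c, hc0, ?_⟩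
  filter_upwards [Ioo_mem_nhds (show a / 2 < a by linarith) (show a < 2 * a by linarith)]
    with b ⟨hb, hb'⟩ z
  have hb0 : 0 < b := by linarith
  have hkernel : gaussianKernel b z ≤ (√(Real.pi * a))⁻¹ * Real.exp (-(2 * c) * z ^ 2) := by
    unfold gaussianKernel
    gcongr ?_⁻¹ * Real.exp ?_
    · exact Real.sqrt_le_sqrt (by nlinarith [Real.pi_pos])
    · rw [div_le_iff₀ (by positivity), hc]
      have : z ^ 2 * b ≤ z ^ 2 * (2 * a) := by gcongr
      field_simp
      linarith
  calc (1 + |z|) ^ n * gaussianKernel b z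
      ≤ n.factorial * Real.exp (1 + 1 / (4 * c)) * Real.exp (c * z ^ 2) *
          ((√(Real.pi * a))⁻¹ * Real.exp (-(2 * c) * z ^ 2)) := by
        gcongr
        · exact gaussianKernel_nonneg b z
        · exact one_add_abs_pow_le_exp hc0 n z
    _ = n.factorial * Real.exp (1 + 1 / (4 * c)) * (√(Real.pi * a))⁻¹ *
          (Real.exp (c * z ^ 2) * Real.exp (-(2 * c) * z ^ 2)) := by ring
    _ = _ := by rw [← Real.exp_add]; ring_nf

lemma exists_one_add_abs_pow_mul_gaussianKernel_le_const (ha : 0 < a) (n : ℕ) :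
    ∃ C, ∀ᶠ b in 𝓝 a, ∀ z, (1 + |z|) ^ n * gaussianKernel b z ≤ C := by
  obtain ⟨C, c, hc, hle⟩ := exists_one_add_abs_pow_mul_gaussianKernel_le ha n
  have hC : 0 ≤ C := by
    have hzero := hle.self_of_nhds 0
    simp only [abs_zero, add_zero, one_pow, one_mul, ne_eq, OfNat.ofNat_ne_zero, not_false_eq_true,
      zero_pow, mul_zero, Real.exp_zero, mul_one] at hzero
    exact (gaussianKernel_nonneg a 0).trans hzero
  refine ⟨C, hle.mono fun b hb z ↦ (hb z).trans (mul_le_of_le_one_right hC ?_)⟩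
  rw [Real.exp_le_one_iff, neg_mul, neg_nonpos]
  positivity

lemma exists_abs_gaussianDeriv_le_const (ha : 0 < a) (k : ℕ) :
    ∃ C, ∀ᶠ b in 𝓝 a, ∀ z, |gaussianDeriv b k z| ≤ C := by
  obtain ⟨C, hC, hderiv⟩ := exists_abs_gaussianDeriv_le (half_pos ha) k
  obtain ⟨C', hkernel⟩ := exists_one_add_abs_pow_mul_gaussianKernel_le_const ha k
  refine ⟨C * C', ?_⟩
  filter_upwards [hkernel, Ici_mem_nhds (half_lt_self ha)] with b hb hab z
  exact (hderiv b hab z).trans (by gcongr; exact hb z)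

end Kernel
section HeatFlow

/-- The `k`-th space derivative at `y` of the density of `X + √a W`, where `X` has law `μ` and `W`
is an independent standard Gaussian. -/
noncomputable def heatFlow (μ : Measure ℝ) (k : ℕ) (a y : ℝ) : ℝ :=
  ∫ x, gaussianDeriv a k (y - x) ∂μ

/-- The convolution of `μ` with the bound `(1 + |z|) ^ n * gaussianKernel a z` of
`gaussianDeriv a n`. It serves to dominate products of the functions `heatFlow μ k`. -/
noncomputable def heatMajorant (μ : Measure ℝ) (n : ℕ) (a y : ℝ) : ℝ :=
  ∫ x, (1 + |y - x|) ^ n * gaussianKernel a (y - x) ∂μ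

variable {μ : Measure ℝ}

lemma heatMajorant_nonneg (n : ℕ) (a y : ℝ) : 0 ≤ heatMajorant μ n a y :=
  integral_nonneg fun x ↦ mul_nonneg (by positivity) (gaussianKernel_nonneg a (y - x))

lemma heatMajorant_zero (a y : ℝ) : heatMajorant μ 0 a y = heatFlow μ 0 a y := by
  simp only [heatMajorant, heatFlow, pow_zero, one_mul, gaussianDeriv]

variable [IsFiniteMeasure μ] {a : ℝ}

lemma dominatedNear_gaussianDeriv_variance (ha : 0 < a) (k : ℕ) (y : ℝ) :
    DominatedNear (fun a x ↦ gaussianDeriv a k (y - x)) μ a := by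
  obtain ⟨C, hC⟩ := exists_abs_gaussianDeriv_le_const ha k
  refine ⟨fun _ ↦ C, integrable_const C, ?_⟩
  filter_upwards [hC, Ioi_mem_nhds ha] with b hb hb0
  exact ⟨((continuous_gaussianDeriv hb0 k).comp (by fun_prop)).aestronglyMeasurable,
    fun x ↦ hb (y - x)⟩

lemma dominatedNear_gaussianDeriv_space (ha : 0 < a) (k : ℕ) (y : ℝ) :
    DominatedNear (fun y x ↦ gaussianDeriv a k (y - x)) μ y := by
  obtain ⟨C, hC⟩ := exists_abs_gaussianDeriv_le_const ha k
  refine ⟨fun _ ↦ C, integrable_const C, Eventually.of_forall fun z ↦ ?_⟩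
  exact ⟨((continuous_gaussianDeriv ha k).comp (by fun_prop)).aestronglyMeasurable,
    fun x ↦ hC.self_of_nhds (z - x)⟩

lemma hasDerivAt_heatFlow_space (ha : 0 < a) (k : ℕ) (y : ℝ) :
    HasDerivAt (heatFlow μ k a) (heatFlow μ (k + 1) a y) y :=
  (dominatedNear_gaussianDeriv_space ha k y).hasDerivAt_integral
    (dominatedNear_gaussianDeriv_space ha (k + 1) y)
    (Eventually.of_forall fun z x ↦
      (hasDerivAt_gaussianDeriv_right ha k (z - x)).comp_sub_const z x)

lemma hasDerivAt_heatFlow_variance (ha : 0 < a) (k : ℕ) (y : ℝ) :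
    HasDerivAt (fun a ↦ heatFlow μ k a y) (heatFlow μ (k + 2) a y / 2) a := by
  have hderiv := (dominatedNear_gaussianDeriv_variance (μ := μ) ha k y).hasDerivAt_integral
    ((dominatedNear_gaussianDeriv_variance ha (k + 2) y).const_mul (1 / 2)) <| by
      filter_upwards [Ioi_mem_nhds ha] with b hb x
      exact (hasDerivAt_gaussianDeriv_left hb (y - x) k).congr_deriv (by ring)
  refine hderiv.congr_deriv ?_
  rw [integral_const_mul, heatFlow]
  ring

lemma continuous_heatFlow (ha : 0 < a) (k : ℕ) : Continuous (heatFlow μ k a) :=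
  continuous_iff_continuousAt.2 fun y ↦ (hasDerivAt_heatFlow_space ha k y).continuousAt

lemma integral_heatFlow_zero (ha : 0 < a) : ∫ y, heatFlow μ 0 a y = μ.real Set.univ := by
  simpa [convolution, heatFlow, gaussianDeriv, integral_gaussianKernel ha] using
    integral_convolution (.mul ℝ ℝ) (integrable_const (μ := μ) (1 : ℝ))
      (integrable_gaussianKernel ha.le)

lemma integrable_gaussianKernel_sub (ha : 0 < a) (y : ℝ) :
    Integrable (fun x ↦ gaussianKernel a (y - x)) μ :=
  (dominatedNear_gaussianDeriv_space ha 0 y).integrable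

lemma heatFlow_zero_pos [NeZero μ] (ha : 0 < a) (y : ℝ) : 0 < heatFlow μ 0 a y := by
  refine (integral_pos_iff_support_of_nonneg (fun x ↦ gaussianKernel_nonneg a (y - x))
    (integrable_gaussianKernel_sub ha y)).2 ?_
  rw [Function.support_eq_univ fun x ↦ (gaussianKernel_pos ha (y - x)).ne']
  exact NeZero.pos _

lemma integrable_one_add_abs_pow_mul_gaussianKernel_sub (ha : 0 < a) (n : ℕ) (y : ℝ) :
    Integrable (fun x ↦ (1 + |y - x|) ^ n * gaussianKernel a (y - x)) μ := by
  obtain ⟨C, hC⟩ := exists_one_add_abs_pow_mul_gaussianKernel_le_const ha n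
  have hcont := continuous_gaussianKernel ha
  refine (integrable_const C).mono' (by fun_prop) (ae_of_all _ fun x ↦ ?_)
  rw [Real.norm_of_nonneg (mul_nonneg (by positivity) (gaussianKernel_nonneg a _))]
  exact hC.self_of_nhds (y - x)

lemma exists_abs_heatFlow_le {b : ℝ} (hb : 0 < b) (k : ℕ) :
    ∃ C ≥ 0, ∀ a ≥ b, ∀ y, |heatFlow μ k a y| ≤ C * heatMajorant μ k a y := by
  obtain ⟨C, hC, hle⟩ := exists_abs_gaussianDeriv_le hb k
  refine ⟨C, hC, fun a ha y ↦ ?_⟩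
  rw [heatFlow, heatMajorant, ← integral_const_mul]
  have hint := integrable_one_add_abs_pow_mul_gaussianKernel_sub (μ := μ) (hb.trans_le ha) k y
  exact norm_integral_le_of_norm_le (f := fun x ↦ gaussianDeriv a k (y - x)) (hint.const_mul C)
    (ae_of_all _ fun x ↦ hle a ha (y - x))

lemma heatMajorant_mul_heatMajorant_le (ha : 0 < a) (i j : ℕ) (y : ℝ) :
    heatMajorant μ i a y * heatMajorant μ j a y ≤
      heatFlow μ 0 a y * heatMajorant μ (i + j) a y := by
  have hint := fun n ↦ integrable_one_add_abs_pow_mul_gaussianKernel_sub (μ := μ) ha n y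
  have hmono : Monovary (fun x ↦ (1 + |y - x|) ^ i) fun x ↦ (1 + |y - x|) ^ j := fun x x' hlt ↦ by
    have : 1 + |y - x| < 1 + |y - x'| := lt_of_pow_lt_pow_left₀ j (by positivity) hlt
    exact pow_le_pow_left₀ (by positivity) this.le i
  simpa only [heatMajorant, heatFlow, gaussianDeriv, ← pow_add] using
    integral_mul_integral_le_of_monovary (fun x ↦ gaussianKernel_nonneg a (y - x)) hmono
      (integrable_gaussianKernel_sub ha y) (hint i) (hint j)
      (by simpa only [← pow_add] using hint (i + j))

lemma exists_one_add_abs_pow_mul_heatMajorant_le (ha : 0 < a) (m n : ℕ)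
    (hμ : Integrable (fun x ↦ (1 + |x|) ^ m) μ) :
    ∃ D : ℝ → ℝ, Integrable D ∧
      ∀ᶠ b in 𝓝 a, ∀ y, (1 + |y|) ^ m * heatMajorant μ n b y ≤ D y := by
  obtain ⟨C, c, hc, hle⟩ := exists_one_add_abs_pow_mul_gaussianKernel_le ha (m + n)
  have hexp : Integrable fun z : ℝ ↦ C * Real.exp (-c * z ^ 2) :=
    (integrable_exp_neg_mul_sq hc).const_mul C
  refine ⟨_, (hμ.convolution_integrand (.mul ℝ ℝ) hexp).integral_prod_left, ?_⟩
  filter_upwards [hle, Ioi_mem_nhds ha] with b hb hb0 y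
  rw [heatMajorant, ← integral_const_mul]
  refine integral_mono
    ((integrable_one_add_abs_pow_mul_gaussianKernel_sub hb0 n y).const_mul _) ?_ fun x ↦ ?_
  · refine hμ.mul_bdd (c := |C|) (by fun_prop) (ae_of_all _ fun x ↦ ?_)
    rw [norm_mul, Real.norm_eq_abs, Real.norm_of_nonneg (Real.exp_nonneg _)]
    refine mul_le_of_le_one_right (abs_nonneg C) (Real.exp_le_one_iff.2 ?_)
    nlinarith [sq_nonneg (y - x)]
  · have htriangle : 1 + |y| ≤ (1 + |x|) * (1 + |y - x|) := by
      have : |y| ≤ |x| + |y - x| := by simpa using abs_add_le x (y - x)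
      nlinarith [abs_nonneg x, abs_nonneg (y - x)]
    have hkernel := gaussianKernel_nonneg b (y - x)
    calc (1 + |y|) ^ m * ((1 + |y - x|) ^ n * gaussianKernel b (y - x))
        ≤ ((1 + |x|) * (1 + |y - x|)) ^ m * ((1 + |y - x|) ^ n * gaussianKernel b (y - x)) := by
          gcongr
      _ = (1 + |x|) ^ m * ((1 + |y - x|) ^ (m + n) * gaussianKernel b (y - x)) := by
          rw [mul_pow]
          ring
      _ ≤ (1 + |x|) ^ m * (C * Real.exp (-c * (y - x) ^ 2)) :=
          mul_le_mul_of_nonneg_left (hb (y - x)) (by positivity)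

/-- The product `f * ∏ k ∈ l, (f⁽ᵏ⁾ / f)`, where `f` is the density of `X + √a W`. All integrands
of the heat-flow computation are combinations of such products. -/
noncomputable def scoreMonomial (μ : Measure ℝ) (l : List ℕ) (a y : ℝ) : ℝ :=
  heatFlow μ 0 a y * (l.map fun k ↦ heatFlow μ k a y / heatFlow μ 0 a y).prod

variable [NeZero μ]

lemma continuous_scoreMonomial (ha : 0 < a) (l : List ℕ) : Continuous (scoreMonomial μ l a) :=
  (continuous_heatFlow ha 0).mul <| continuous_list_prod l fun k _ ↦
    (continuous_heatFlow ha k).div (continuous_heatFlow ha 0) fun y ↦ (heatFlow_zero_pos ha y).ne'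

/-- The association inequality lets the factors `1 / f` cancel. -/
lemma exists_abs_scoreMonomial_le {b : ℝ} (hb : 0 < b) :
    ∀ l : List ℕ, ∃ C ≥ 0, ∀ a ≥ b, ∀ y, |scoreMonomial μ l a y| ≤ C * heatMajorant μ l.sum a y
  | [] => ⟨1, zero_le_one, fun a ha y ↦ by
      simp [scoreMonomial, heatMajorant_zero, abs_of_pos (heatFlow_zero_pos (hb.trans_le ha) y)]⟩
  | k :: l => by
    obtain ⟨C₁, hC₁, h₁⟩ := exists_abs_heatFlow_le (μ := μ) hb k
    obtain ⟨C₂, hC₂, h₂⟩ := exists_abs_scoreMonomial_le hb l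
    refine ⟨C₁ * C₂, by positivity, fun a ha y ↦ ?_⟩
    have hpos := heatFlow_zero_pos (μ := μ) (hb.trans_le ha) y
    have hcons : scoreMonomial μ (k :: l) a y =
        heatFlow μ k a y * scoreMonomial μ l a y / heatFlow μ 0 a y := by
      simp only [scoreMonomial, List.map_cons, List.prod_cons]
      ring
    rw [hcons, abs_div, abs_mul, abs_of_pos hpos, div_le_iff₀ hpos, List.sum_cons]
    calc |heatFlow μ k a y| * |scoreMonomial μ l a y|
        ≤ C₁ * heatMajorant μ k a y * (C₂ * heatMajorant μ l.sum a y) :=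
          mul_le_mul (h₁ a ha y) (h₂ a ha y) (abs_nonneg _)
            (mul_nonneg hC₁ (heatMajorant_nonneg k a y))
      _ = C₁ * C₂ * (heatMajorant μ k a y * heatMajorant μ l.sum a y) := by ring
      _ ≤ C₁ * C₂ * (heatFlow μ 0 a y * heatMajorant μ (k + l.sum) a y) :=
          mul_le_mul_of_nonneg_left
            (heatMajorant_mul_heatMajorant_le (hb.trans_le ha) k l.sum y) (by positivity)
      _ = C₁ * C₂ * heatMajorant μ (k + l.sum) a y * heatFlow μ 0 a y := by ring

lemma dominatedNear_mul_scoreMonomial (ha : 0 < a) {w : ℝ → ℝ → ℝ} {K : ℝ} (hK : 0 ≤ K) {m : ℕ}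
    (hμ : Integrable (fun x ↦ (1 + |x|) ^ m) μ)
    (hw : ∀ᶠ b in 𝓝 a, Continuous (w b) ∧ ∀ y, |w b y| ≤ K * (1 + |y|) ^ m) (l : List ℕ) :
    DominatedNear (fun b y ↦ w b y * scoreMonomial μ l b y) volume a := by
  obtain ⟨C, hC, hmonomial⟩ := exists_abs_scoreMonomial_le (μ := μ) (half_pos ha) l
  obtain ⟨D, hD, hle⟩ := exists_one_add_abs_pow_mul_heatMajorant_le ha m l.sum hμ
  refine ⟨fun y ↦ K * C * D y, hD.const_mul _, ?_⟩
  filter_upwards [hw, hle, Ioi_mem_nhds (half_lt_self ha)] with b ⟨hcont, hwb⟩ hDb hb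
  have hb0 : 0 < b := (half_pos ha).trans hb
  refine ⟨(hcont.mul (continuous_scoreMonomial hb0 l)).aestronglyMeasurable, fun y ↦ ?_⟩
  calc |w b y * scoreMonomial μ l b y|
      ≤ K * (1 + |y|) ^ m * (C * heatMajorant μ l.sum b y) := by
        rw [abs_mul]
        exact mul_le_mul (hwb y) (hmonomial b hb.le y) (abs_nonneg _) (by positivity)
    _ = K * C * ((1 + |y|) ^ m * heatMajorant μ l.sum b y) := by ring
    _ ≤ K * C * D y := by gcongr; exact hDb y

lemma dominatedNear_scoreMonomial (ha : 0 < a) (l : List ℕ) :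
    DominatedNear (scoreMonomial μ l) volume a := by
  simpa only [one_mul] using dominatedNear_mul_scoreMonomial (μ := μ) (w := fun _ _ ↦ 1) ha
    zero_le_one (m := 0) (by simp) (by simp [continuous_const]) l

lemma integrable_scoreMonomial (ha : 0 < a) (l : List ℕ) : Integrable (scoreMonomial μ l a) :=
  (dominatedNear_scoreMonomial ha l).integrable

end HeatFlow

/-- The score function `f' / f` of a density `f`. -/
noncomputable def score (f : ℝ → ℝ) (y : ℝ) : ℝ := deriv (fun y' ↦ Real.log (f y')) y

/-- The Fisher information of a density `f`. -/
noncomputable def fisherInformation (f : ℝ → ℝ) : ℝ := ∫ y, f y * score f y ^ 2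

/-- The differential entropy, in nats, of a density `f`. -/
noncomputable def differentialEntropy (f : ℝ → ℝ) : ℝ := -∫ y, f y * Real.log (f y)

section FisherInformation

variable {μ : Measure ℝ} [IsFiniteMeasure μ] [NeZero μ] {a : ℝ}

lemma hasDerivAt_log_heatFlow (ha : 0 < a) (y : ℝ) :
    HasDerivAt (fun y ↦ Real.log (heatFlow μ 0 a y)) (heatFlow μ 1 a y / heatFlow μ 0 a y) y :=
  (hasDerivAt_heatFlow_space ha 0 y).log (heatFlow_zero_pos ha y).ne'

lemma score_heatFlow (ha : 0 < a) :
    score (heatFlow μ 0 a) = fun y ↦ heatFlow μ 1 a y / heatFlow μ 0 a y :=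
  funext fun y ↦ (hasDerivAt_log_heatFlow ha y).deriv

lemma hasDerivAt_score_heatFlow (ha : 0 < a) (y : ℝ) :
    HasDerivAt (score (heatFlow μ 0 a))
      (heatFlow μ 2 a y / heatFlow μ 0 a y - (heatFlow μ 1 a y / heatFlow μ 0 a y) ^ 2) y := by
  have hpos := heatFlow_zero_pos (μ := μ) ha y
  rw [score_heatFlow ha]
  refine ((hasDerivAt_heatFlow_space ha 1 y).div
    (hasDerivAt_heatFlow_space ha 0 y) hpos.ne').congr_deriv ?_
  field_simp

lemma heatFlow_eq_scoreMonomial (ha : 0 < a) (k : ℕ) : heatFlow μ k a = scoreMonomial μ [k] a := by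
  ext y
  have hpos := heatFlow_zero_pos (μ := μ) ha y
  simp only [scoreMonomial, List.map_cons, List.map_nil, List.prod_singleton]
  field_simp

lemma integrable_heatFlow (ha : 0 < a) (k : ℕ) : Integrable (heatFlow μ k a) :=
  heatFlow_eq_scoreMonomial (μ := μ) ha k ▸ integrable_scoreMonomial ha [k]

lemma integral_heatFlow_succ (ha : 0 < a) (k : ℕ) : ∫ y, heatFlow μ (k + 1) a y = 0 :=
  integral_eq_zero_of_hasDerivAt_of_integrable (hasDerivAt_heatFlow_space ha k)
    (integrable_heatFlow ha (k + 1)) (integrable_heatFlow ha k)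

lemma heatFlow_mul_score_sq (ha : 0 < a) (y : ℝ) :
    heatFlow μ 0 a y * score (heatFlow μ 0 a) y ^ 2 = scoreMonomial μ [1, 1] a y := by
  simp only [score_heatFlow ha, scoreMonomial, List.map_cons, List.map_nil, List.prod_cons,
    List.prod_nil]
  ring

lemma fisherInformation_heatFlow (ha : 0 < a) :
    fisherInformation (heatFlow μ 0 a) = ∫ y, scoreMonomial μ [1, 1] a y :=
  integral_congr_ae (ae_of_all _ (heatFlow_mul_score_sq ha))

lemma heatFlow_mul_deriv_score (ha : 0 < a) (y : ℝ) :
    heatFlow μ 0 a y * deriv (score (heatFlow μ 0 a)) y =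
      heatFlow μ 2 a y - scoreMonomial μ [1, 1] a y := by
  have hpos := heatFlow_zero_pos (μ := μ) ha y
  simp only [(hasDerivAt_score_heatFlow ha y).deriv, scoreMonomial, List.map_cons, List.map_nil,
    List.prod_cons, List.prod_nil]
  field_simp

lemma heatFlow_mul_deriv_score_sq (ha : 0 < a) (y : ℝ) :
    heatFlow μ 0 a y * deriv (score (heatFlow μ 0 a)) y ^ 2 =
      scoreMonomial μ [2, 2] a y - 2 * scoreMonomial μ [1, 1, 2] a y +
        scoreMonomial μ [1, 1, 1, 1] a y := by
  simp only [(hasDerivAt_score_heatFlow ha y).deriv, scoreMonomial, List.map_cons, List.map_nil,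
    List.prod_cons, List.prod_nil]
  ring

lemma integrable_heatFlow_mul_deriv_score (ha : 0 < a) :
    Integrable fun y ↦ heatFlow μ 0 a y * deriv (score (heatFlow μ 0 a)) y := by
  simp only [heatFlow_mul_deriv_score ha]
  exact (integrable_heatFlow ha 2).sub (integrable_scoreMonomial ha [1, 1])

lemma integrable_heatFlow_mul_deriv_score_sq (ha : 0 < a) :
    Integrable fun y ↦ heatFlow μ 0 a y * deriv (score (heatFlow μ 0 a)) y ^ 2 := by
  simp only [heatFlow_mul_deriv_score_sq ha]
  exact ((integrable_scoreMonomial ha _).sub ((integrable_scoreMonomial ha _).const_mul 2)).add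
    (integrable_scoreMonomial ha _)

lemma integral_heatFlow_mul_deriv_score (ha : 0 < a) :
    ∫ y, heatFlow μ 0 a y * deriv (score (heatFlow μ 0 a)) y =
      -fisherInformation (heatFlow μ 0 a) := by
  simp only [heatFlow_mul_deriv_score ha]
  rw [integral_sub (integrable_heatFlow ha 2) (integrable_scoreMonomial ha [1, 1]),
    integral_heatFlow_succ ha 1, fisherInformation_heatFlow ha, zero_sub]

lemma hasDerivAt_scoreMonomial_one_one_variance (ha : 0 < a) (y : ℝ) :
    HasDerivAt (fun a ↦ scoreMonomial μ [1, 1] a y)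
      (scoreMonomial μ [1, 3] a y - 1 / 2 * scoreMonomial μ [1, 1, 2] a y) a := by
  have hpos := heatFlow_zero_pos (μ := μ) ha y
  have h₀ := hasDerivAt_heatFlow_variance (μ := μ) ha 0 y
  have h₁ := hasDerivAt_heatFlow_variance (μ := μ) ha 1 y
  have hquot := h₁.div h₀ hpos.ne'
  refine (h₀.mul (hquot.mul (hquot.mul_const 1))).congr_deriv ?_
  simp only [scoreMonomial, List.map_cons, List.map_nil, List.prod_cons, List.prod_nil,
    Pi.div_apply, Pi.mul_apply]
  field_simp
  ring

/-- This total derivative turns `∂ₐ (f S ^ 2)` into `-f S' ^ 2` up to a boundary term. -/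
lemma hasDerivAt_fisherFlux (ha : 0 < a) (y : ℝ) :
    HasDerivAt (fun y ↦ scoreMonomial μ [1, 2] a y - 1 / 2 * scoreMonomial μ [1, 1, 1] a y)
      (scoreMonomial μ [1, 3] a y - 1 / 2 * scoreMonomial μ [1, 1, 2] a y +
        heatFlow μ 0 a y * deriv (score (heatFlow μ 0 a)) y ^ 2) y := by
  have hpos := heatFlow_zero_pos (μ := μ) ha y
  have h := hasDerivAt_heatFlow_space (μ := μ) ha
  have hρ := fun k ↦ (h k y).div (h 0 y) hpos.ne'
  refine (((h 0 y).mul ((hρ 1).mul ((hρ 2).mul_const 1))).sub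
    (((h 0 y).mul ((hρ 1).mul ((hρ 1).mul ((hρ 1).mul_const 1)))).const_mul (1 / 2))).congr_deriv ?_
  rw [heatFlow_mul_deriv_score_sq ha]
  simp only [scoreMonomial, List.map_cons, List.map_nil, List.prod_cons, List.prod_nil,
    Pi.div_apply, Pi.mul_apply]
  field_simp
  ring

lemma integral_deriv_variance_scoreMonomial_one_one (ha : 0 < a) :
    ∫ y, (scoreMonomial μ [1, 3] a y - 1 / 2 * scoreMonomial μ [1, 1, 2] a y) =
      -∫ y, heatFlow μ 0 a y * deriv (score (heatFlow μ 0 a)) y ^ 2 := by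
  have hint := integrable_scoreMonomial (μ := μ) ha
  have hvariance : Integrable fun y ↦
      scoreMonomial μ [1, 3] a y - 1 / 2 * scoreMonomial μ [1, 1, 2] a y :=
    (hint [1, 3]).sub ((hint [1, 1, 2]).const_mul (1 / 2))
  have hscore := integrable_heatFlow_mul_deriv_score_sq (μ := μ) ha
  rw [eq_neg_iff_add_eq_zero, ← integral_add hvariance hscore]
  exact integral_eq_zero_of_hasDerivAt_of_integrable (hasDerivAt_fisherFlux ha)
    (hvariance.add hscore) ((hint [1, 2]).sub ((hint [1, 1, 1]).const_mul (1 / 2)))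

lemma hasDerivAt_fisherInformation_heatFlow (ha : 0 < a) :
    HasDerivAt (fun a ↦ fisherInformation (heatFlow μ 0 a))
      (-∫ y, heatFlow μ 0 a y * deriv (score (heatFlow μ 0 a)) y ^ 2) a := by
  rw [← integral_deriv_variance_scoreMonomial_one_one ha]
  have hdom := dominatedNear_scoreMonomial (μ := μ) ha
  refine ((hdom [1, 1]).hasDerivAt_integral
    ((hdom [1, 3]).sub ((hdom [1, 1, 2]).const_mul (1 / 2))) ?_).congr_of_eventuallyEq ?_
  · filter_upwards [Ioi_mem_nhds ha] with b hb y using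
      hasDerivAt_scoreMonomial_one_one_variance hb y
  · filter_upwards [Ioi_mem_nhds ha] with b hb using fisherInformation_heatFlow hb

end FisherInformation

section SecondMoment

variable {μ : Measure ℝ} [IsFiniteMeasure μ]

lemma integrable_one_add_abs_sq (hμ : Integrable (fun x ↦ x ^ 2) μ) :
    Integrable (fun x ↦ (1 + |x|) ^ 2) μ := by
  refine ((integrable_const 2).add (hμ.const_mul 2)).mono' (by fun_prop) (ae_of_all _ fun x ↦ ?_)
  rw [Real.norm_of_nonneg (by positivity), Pi.add_apply]
  nlinarith [sq_abs x, sq_nonneg (1 - |x|)]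

lemma integrable_sub_sq (hμ : Integrable (fun x ↦ x ^ 2) μ) (y : ℝ) :
    Integrable (fun x ↦ (y - x) ^ 2) μ := by
  refine ((integrable_const (2 * y ^ 2)).add (hμ.const_mul 2)).mono' (by fun_prop)
    (ae_of_all _ fun x ↦ ?_)
  rw [Real.norm_of_nonneg (by positivity), Pi.add_apply]
  nlinarith [sq_nonneg (y + x)]

lemma integral_sub_sq_le (hμ : Integrable (fun x ↦ x ^ 2) μ) (y : ℝ) :
    ∫ x, (y - x) ^ 2 ∂μ ≤ (∫ x, (1 + |x|) ^ 2 ∂μ) * (1 + |y|) ^ 2 := by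
  rw [← integral_mul_const]
  refine integral_mono (integrable_sub_sq hμ y)
    ((integrable_one_add_abs_sq hμ).mul_const _) fun x ↦ ?_
  have hle : |y - x| ≤ (1 + |x|) * (1 + |y|) := by
    nlinarith [abs_sub y x, abs_nonneg x, abs_nonneg y]
  calc (y - x) ^ 2 = |y - x| ^ 2 := (sq_abs _).symm
    _ ≤ ((1 + |x|) * (1 + |y|)) ^ 2 := by gcongr
    _ = (1 + |x|) ^ 2 * (1 + |y|) ^ 2 := mul_pow _ _ 2

end SecondMoment

/-- The entropy power of a density `f`: the variance of the Gaussian law with the same entropy. -/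
noncomputable def entropyPower (f : ℝ → ℝ) : ℝ :=
  (2 * Real.pi * Real.exp 1)⁻¹ * Real.exp (2 * differentialEntropy f)

section Entropy

variable {μ : Measure ℝ} [IsProbabilityMeasure μ] {a : ℝ}

lemma integral_heatFlow_mul_fisherInformation_add_deriv_score_sq (ha : 0 < a) :
    ∫ y, heatFlow μ 0 a y *
        (fisherInformation (heatFlow μ 0 a) + deriv (score (heatFlow μ 0 a)) y) ^ 2 =
      (∫ y, heatFlow μ 0 a y * deriv (score (heatFlow μ 0 a)) y ^ 2) -
        fisherInformation (heatFlow μ 0 a) ^ 2 := by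
  set J := fisherInformation (heatFlow μ 0 a)
  have hlin := integrable_heatFlow_mul_deriv_score (μ := μ) ha
  have hsq := integrable_heatFlow_mul_deriv_score_sq (μ := μ) ha
  have hconst := (integrable_heatFlow (μ := μ) ha 0).const_mul (J ^ 2)
  have hsum : Integrable fun y ↦ J ^ 2 * heatFlow μ 0 a y
      + 2 * J * (heatFlow μ 0 a y * deriv (score (heatFlow μ 0 a)) y) :=
    hconst.add (hlin.const_mul (2 * J))
  calc _ = ∫ y, (J ^ 2 * heatFlow μ 0 a y
          + 2 * J * (heatFlow μ 0 a y * deriv (score (heatFlow μ 0 a)) y)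
          + heatFlow μ 0 a y * deriv (score (heatFlow μ 0 a)) y ^ 2) := by
        congr with y
        ring
    _ = J ^ 2 * 1 + 2 * J * -J
          + ∫ y, heatFlow μ 0 a y * deriv (score (heatFlow μ 0 a)) y ^ 2 := by
        rw [integral_add hsum hsq, integral_add hconst (hlin.const_mul (2 * J)),
          integral_const_mul, integral_const_mul, integral_heatFlow_zero ha,
          probReal_univ, integral_heatFlow_mul_deriv_score ha]
    _ = _ := by ring

lemma log_heatFlow_zero_le (ha : 0 < a) (y : ℝ) :
    Real.log (heatFlow μ 0 a y) ≤ -Real.log √(2 * Real.pi * a) := by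
  rw [← Real.log_inv]
  refine Real.log_le_log (heatFlow_zero_pos ha y) ?_
  calc heatFlow μ 0 a y ≤ ∫ _, (√(2 * Real.pi * a))⁻¹ ∂μ := by
        refine integral_mono (integrable_gaussianKernel_sub ha y) (integrable_const _) fun x ↦ ?_
        refine mul_le_of_le_one_right (by positivity) (Real.exp_le_one_iff.2 ?_)
        exact div_nonpos_of_nonpos_of_nonneg (by nlinarith [sq_nonneg (y - x)]) (by positivity)
    _ = (√(2 * Real.pi * a))⁻¹ := by simp

lemma le_log_heatFlow_zero (ha : 0 < a) (hμ : Integrable (fun x ↦ x ^ 2) μ) (y : ℝ) :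
    -Real.log √(2 * Real.pi * a) - (∫ x, (y - x) ^ 2 ∂μ) / (2 * a) ≤
      Real.log (heatFlow μ 0 a y) := by
  have hsqrt : 0 < (√(2 * Real.pi * a))⁻¹ := by positivity
  have hint : Integrable (fun x ↦ Real.exp (-(y - x) ^ 2 / (2 * a))) μ :=
    (integrable_const_mul_iff hsqrt.ne'.isUnit _).1 (integrable_gaussianKernel_sub ha y)
  have hjensen := convexOn_exp.map_integral_le Real.continuous_exp.continuousOn isClosed_univ
    (by simp) ((integrable_sub_sq hμ y).neg.div_const (2 * a)) hint
  rw [Real.le_log_iff_exp_le (heatFlow_zero_pos ha y), sub_eq_add_neg, Real.exp_add,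
    Real.exp_neg, Real.exp_log (by positivity)]
  calc (√(2 * Real.pi * a))⁻¹ * Real.exp (-((∫ x, (y - x) ^ 2 ∂μ) / (2 * a)))
      = (√(2 * Real.pi * a))⁻¹ * Real.exp (∫ x, -(y - x) ^ 2 / (2 * a) ∂μ) := by
        rw [integral_div, integral_neg, neg_div]
    _ ≤ (√(2 * Real.pi * a))⁻¹ * ∫ x, Real.exp (-(y - x) ^ 2 / (2 * a)) ∂μ := by
        gcongr
        exact hjensen
    _ = heatFlow μ 0 a y := (integral_const_mul _ _).symm

lemma exists_abs_log_heatFlow_le (ha : 0 < a) (hμ : Integrable (fun x ↦ x ^ 2) μ) :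
    ∃ K ≥ 0, ∀ᶠ b in 𝓝 a, ∀ y, |Real.log (heatFlow μ 0 b y)| ≤ K * (1 + |y|) ^ 2 := by
  set L : ℝ → ℝ := fun b ↦ Real.log √(2 * Real.pi * b)
  set M := ∫ x, (1 + |x|) ^ 2 ∂μ
  have : 0 ≤ M := integral_nonneg fun x ↦ by positivity
  have hLcont : ContinuousAt L a := by
    have : √(2 * Real.pi * a) ≠ 0 := by positivity
    fun_prop (disch := assumption)
  refine ⟨|L a| + 1 + M / a, by positivity, ?_⟩
  filter_upwards [hLcont.abs.eventually_lt_const (lt_add_one _), Ioi_mem_nhds (half_lt_self ha)]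
    with b hLb hb y
  have hb0 : 0 < b := (half_pos ha).trans hb
  have hvariance : (∫ x, (y - x) ^ 2 ∂μ) / (2 * b) ≤ M / a * (1 + |y|) ^ 2 := by
    calc (∫ x, (y - x) ^ 2 ∂μ) / (2 * b) ≤ M * (1 + |y|) ^ 2 / a := by
          gcongr
          · exact integral_sub_sq_le hμ y
          · linarith [Set.mem_Ioi.1 hb]
      _ = M / a * (1 + |y|) ^ 2 := by ring
  have hone : |L a| + 1 ≤ (|L a| + 1) * (1 + |y|) ^ 2 :=
    le_mul_of_one_le_right (by positivity) (one_le_pow₀ (by simp))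
  have hnonneg : 0 ≤ M / a * (1 + |y|) ^ 2 := by positivity
  have hupper := log_heatFlow_zero_le (μ := μ) hb0 y
  have hlower := le_log_heatFlow_zero hb0 hμ y
  rw [abs_lt] at hLb
  rw [abs_le]
  constructor <;> linarith

lemma dominatedNear_log_heatFlow_mul_scoreMonomial (ha : 0 < a)
    (hμ : Integrable (fun x ↦ x ^ 2) μ) (l : List ℕ) :
    DominatedNear (fun b y ↦ Real.log (heatFlow μ 0 b y) * scoreMonomial μ l b y) volume a := by
  obtain ⟨K, hK, hle⟩ := exists_abs_log_heatFlow_le ha hμ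
  refine dominatedNear_mul_scoreMonomial ha hK (integrable_one_add_abs_sq hμ) ?_ l
  filter_upwards [hle, Ioi_mem_nhds ha] with b hb hb0
  exact ⟨(continuous_heatFlow hb0 0).log fun y ↦ (heatFlow_zero_pos hb0 y).ne', hb⟩

lemma integral_log_heatFlow_mul_heatFlow_two (ha : 0 < a) (hμ : Integrable (fun x ↦ x ^ 2) μ) :
    ∫ y, Real.log (heatFlow μ 0 a y) * heatFlow μ 2 a y =
      -fisherInformation (heatFlow μ 0 a) := by
  have hlog : ∀ k, Integrable fun y ↦ Real.log (heatFlow μ 0 a y) * heatFlow μ k a y := fun k ↦ by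
    simpa only [heatFlow_eq_scoreMonomial ha k] using
      (dominatedNear_log_heatFlow_mul_scoreMonomial ha hμ [k]).integrable
  have hfisher := integrable_scoreMonomial (μ := μ) ha [1, 1]
  have hflux : ∀ y, HasDerivAt (fun y ↦ Real.log (heatFlow μ 0 a y) * heatFlow μ 1 a y)
      (Real.log (heatFlow μ 0 a y) * heatFlow μ 2 a y + scoreMonomial μ [1, 1] a y) y := fun y ↦ by
    refine ((hasDerivAt_log_heatFlow ha y).mul (hasDerivAt_heatFlow_space ha 1 y)).congr_deriv ?_
    rw [← heatFlow_mul_score_sq ha, score_heatFlow ha]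
    have := heatFlow_zero_pos (μ := μ) ha y
    field_simp
    ring
  rw [fisherInformation_heatFlow ha, eq_neg_iff_add_eq_zero, ← integral_add (hlog 2) hfisher]
  exact integral_eq_zero_of_hasDerivAt_of_integrable hflux ((hlog 2).add hfisher) (hlog 1)

lemma hasDerivAt_differentialEntropy_heatFlow (ha : 0 < a)
    (hμ : Integrable (fun x ↦ x ^ 2) μ) :
    HasDerivAt (fun a ↦ differentialEntropy (heatFlow μ 0 a))
      (fisherInformation (heatFlow μ 0 a) / 2) a := by
  have hlog := dominatedNear_log_heatFlow_mul_scoreMonomial ha hμ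
  have hderiv := (hlog []).hasDerivAt_integral
    (((hlog [2]).add (dominatedNear_scoreMonomial ha [2])).const_mul (1 / 2)) <| by
      filter_upwards [Ioi_mem_nhds ha] with b hb y
      have hpos := heatFlow_zero_pos (μ := μ) hb y
      have hvariance := hasDerivAt_heatFlow_variance (μ := μ) hb 0 y
      simp only [scoreMonomial, List.map_cons, List.map_nil, List.prod_cons, List.prod_nil, mul_one]
      refine ((hvariance.log hpos.ne').mul hvariance).congr_deriv ?_
      field_simp
      ring
  have hint2 := (hlog [2]).integrable
  simp only [← heatFlow_eq_scoreMonomial ha] at hint2 hderiv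
  rw [integral_const_mul, integral_add hint2 (integrable_heatFlow ha 2),
    integral_log_heatFlow_mul_heatFlow_two ha hμ, integral_heatFlow_succ ha 1] at hderiv
  refine (hderiv.neg.congr_deriv (by ring)).congr_of_eventuallyEq (.of_forall fun b ↦ ?_)
  simp only [differentialEntropy, scoreMonomial, List.map_nil, List.prod_nil, mul_one, mul_comm,
    Pi.neg_apply]

lemma hasDerivAt_entropyPower_heatFlow (ha : 0 < a) (hμ : Integrable (fun x ↦ x ^ 2) μ) :
    HasDerivAt (fun a ↦ entropyPower (heatFlow μ 0 a))
      (entropyPower (heatFlow μ 0 a) * fisherInformation (heatFlow μ 0 a)) a := by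
  refine (((hasDerivAt_differentialEntropy_heatFlow ha hμ).const_mul 2).exp.const_mul
    (2 * Real.pi * Real.exp 1)⁻¹).congr_deriv ?_
  rw [entropyPower]
  ring

lemma hasDerivAt_deriv_entropyPower_heatFlow (ha : 0 < a) (hμ : Integrable (fun x ↦ x ^ 2) μ) :
    HasDerivAt (deriv fun a ↦ entropyPower (heatFlow μ 0 a))
      (-entropyPower (heatFlow μ 0 a) * ∫ y, heatFlow μ 0 a y *
        (fisherInformation (heatFlow μ 0 a) + deriv (score (heatFlow μ 0 a)) y) ^ 2) a := by
  have hderiv : (deriv fun a ↦ entropyPower (heatFlow μ 0 a)) =ᶠ[𝓝 a] fun a ↦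
      entropyPower (heatFlow μ 0 a) * fisherInformation (heatFlow μ 0 a) := by
    filter_upwards [Ioi_mem_nhds ha] with b hb using (hasDerivAt_entropyPower_heatFlow hb hμ).deriv
  rw [hderiv.hasDerivAt_iff, integral_heatFlow_mul_fisherInformation_add_deriv_score_sq ha]
  exact ((hasDerivAt_entropyPower_heatFlow ha hμ).mul
    (hasDerivAt_fisherInformation_heatFlow ha)).congr_deriv (by ring)

end Entropy

section Density

variable {α E : Type*} [MeasurableSpace α] {ν : Measure α} {f : α → ℝ}
  [NormedAddCommGroup E] [NormedSpace ℝ E]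

lemma isProbabilityMeasure_withDensity_ofReal (hf : 0 ≤ᵐ[ν] f) (hprob : ∫ x, f x ∂ν = 1) :
    IsProbabilityMeasure (ν.withDensity fun x ↦ ENNReal.ofReal (f x)) := by
  refine ⟨?_⟩
  rw [withDensity_apply _ .univ, setLIntegral_univ, ← ofReal_integral_eq_lintegral_ofReal
    (integrable_of_integral_eq_one hprob) hf, hprob, ENNReal.ofReal_one]

lemma integral_withDensity_ofReal (hf : 0 ≤ᵐ[ν] f) (hmeas : AEMeasurable f ν) (g : α → E) :
    ∫ x, g x ∂ν.withDensity (fun x ↦ ENNReal.ofReal (f x)) = ∫ x, f x • g x ∂ν := by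
  rw [integral_withDensity_eq_integral_toReal_smul₀ hmeas.ennreal_ofReal (by simp)]
  refine integral_congr_ae (hf.mono fun x hx ↦ ?_)
  simp only [ENNReal.toReal_ofReal hx]

lemma integrable_withDensity_ofReal_iff (hf : 0 ≤ᵐ[ν] f) (hmeas : AEMeasurable f ν) (g : α → E) :
    Integrable g (ν.withDensity fun x ↦ ENNReal.ofReal (f x)) ↔
      Integrable (fun x ↦ f x • g x) ν := by
  rw [integrable_withDensity_iff_integrable_smul₀' hmeas.ennreal_ofReal (by simp)]
  refine integrable_congr (hf.mono fun x hx ↦ ?_)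
  simp only [ENNReal.toReal_ofReal hx]

end Density

end GaussianChannel

open GaussianChannel Topology in
theorem costa_epi_concavity_general
    (μ : Measure ℝ) [IsProbabilityMeasure μ]
    (hμ : Integrable (fun x ↦ x ^ 2) μ)
    (fY : ℝ → ℝ → ℝ)
    (hfY : ∀ a, 0 < a → ∀ y, fY a y =
      ∫ x, (√(2 * Real.pi * a))⁻¹ * Real.exp (-(y - x) ^ 2 / (2 * a)) ∂μ)
    (h : ℝ → ℝ)
    (hh : ∀ a, 0 < a → h a = -∫ y, fY a y * Real.log (fY a y))
    (J : ℝ → ℝ)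
    (hJ : ∀ a, 0 < a → J a = ∫ y, fY a y * (deriv (fun y' ↦ Real.log (fY a y')) y) ^ 2)
    (N : ℝ → ℝ)
    (hN : ∀ a, 0 < a → N a = (2 * Real.pi * Real.exp 1)⁻¹ * Real.exp (2 * h a)) :
    (∀ a, 0 < a → DifferentiableAt ℝ N a) ∧
    (∀ a, 0 < a → HasDerivAt (deriv N)
      (-N a * ∫ y, fY a y *
        (J a + deriv (fun y' ↦ deriv (fun y'' ↦ Real.log (fY a y'')) y') y) ^ 2)
      a) ∧
    (∀ a, 0 < a → deriv (deriv N) a ≤ 0) ∧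
    ConcaveOn ℝ (Set.Ioi 0) N := by
  have hfY' : ∀ a, 0 < a → fY a = heatFlow μ 0 a := fun a ha ↦ funext (hfY a ha)
  have hN' : ∀ a, 0 < a → N a = entropyPower (heatFlow μ 0 a) := fun a ha ↦ by
    rw [hN a ha, hh a ha, hfY' a ha, entropyPower, differentialEntropy]
  have hNnhds : ∀ a, 0 < a → N =ᶠ[𝓝 a] fun a ↦ entropyPower (heatFlow μ 0 a) := fun a ha ↦ by
    filter_upwards [Ioi_mem_nhds ha] with b hb using hN' b hb
  have hdiff : ∀ a, 0 < a → DifferentiableAt ℝ N a := fun a ha ↦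
    ((hNnhds a ha).hasDerivAt_iff.2 (hasDerivAt_entropyPower_heatFlow ha hμ)).differentiableAt
  have hderiv2 : ∀ a, 0 < a → HasDerivAt (deriv N) (-N a * ∫ y, fY a y *
      (J a + deriv (score (fY a)) y) ^ 2) a := fun a ha ↦ by
    rw [(hNnhds a ha).deriv.hasDerivAt_iff, hN' a ha, hJ a ha, hfY' a ha]
    exact hasDerivAt_deriv_entropyPower_heatFlow ha hμ
  have hnonpos : ∀ a, 0 < a → deriv (deriv N) a ≤ 0 := fun a ha ↦ by
    have hNpos : 0 < N a := by rw [hN a ha]; positivity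
    have hfYpos : ∀ y, 0 ≤ fY a y := fun y ↦ hfY' a ha ▸ (heatFlow_zero_pos ha y).le
    rw [(hderiv2 a ha).deriv, neg_mul, neg_nonpos]
    exact mul_nonneg hNpos.le (integral_nonneg fun y ↦ mul_nonneg (hfYpos y) (sq_nonneg _))
  exact ⟨hdiff, hderiv2, hnonpos, concaveOn_of_deriv2_nonpos' (convex_Ioi 0)
    (fun a ha ↦ (hdiff a ha).differentiableWithinAt)
    (fun a ha ↦ (hderiv2 a ha).differentiableAt.differentiableWithinAt) hnonpos⟩

/-- **Costa's entropy power inequality (concavity form).** For the additive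
Gaussian noise channel, the entropy power `N(a) = (1/(2πe)) e^{2h(a)}` of the
output is twice differentiable on `a > 0`,
`d²/da² N(a) = −N(a)·E_Y[(J(a) + ∂/∂y S_Y(y;a))²] ≤ 0`,
and in particular `N` is concave on `(0,∞)`. -/
theorem costa_epi_concavity
    (fX : ℝ → ℝ)
    (hfX_nonneg : ∀ x, 0 ≤ fX x)
    (hfX_prob : (∫ x, fX x) = 1)
    (hfX_mom : Integrable (fun x => x ^ 2 * fX x))
    (fY : ℝ → ℝ → ℝ)
    (hfY : ∀ a, 0 < a → ∀ y, fY a y =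
      ∫ x, fX x * ((Real.sqrt (2 * Real.pi * a))⁻¹ *
        Real.exp (-(y - x) ^ 2 / (2 * a))))
    (h : ℝ → ℝ)
    (hh : ∀ a, 0 < a → h a = -∫ y, fY a y * Real.log (fY a y))
    (J : ℝ → ℝ)
    (hJ : ∀ a, 0 < a → J a =
      ∫ y, fY a y * (deriv (fun y' => Real.log (fY a y')) y) ^ 2)
    (N : ℝ → ℝ)
    (hN : ∀ a, N a = (2 * Real.pi * Real.exp 1)⁻¹ * Real.exp (2 * h a)) :
    (∀ a, 0 < a → DifferentiableAt ℝ N a) ∧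
    (∀ a, 0 < a → HasDerivAt (deriv N)
      (-N a * ∫ y, fY a y *
        (J a + deriv (fun y' => deriv (fun y'' => Real.log (fY a y'')) y') y) ^ 2)
      a) ∧
    (∀ a, 0 < a → deriv (deriv N) a ≤ 0) ∧
    ConcaveOn ℝ (Set.Ioi 0) N := by
  have hnonneg : 0 ≤ᵐ[volume] fX := ae_of_all _ hfX_nonneg
  have hmeas : AEMeasurable fX := (integrable_of_integral_eq_one hfX_prob).aemeasurable
  have := GaussianChannel.isProbabilityMeasure_withDensity_ofReal hnonneg hfX_prob
  refine costa_epi_concavity_general (volume.withDensity fun x ↦ ENNReal.ofReal (fX x))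
    ((GaussianChannel.integrable_withDensity_ofReal_iff hnonneg hmeas _).2 ?_) fY
    (fun a ha y ↦ ?_) h hh J hJ N fun a _ ↦ hN a
  · simpa only [smul_eq_mul, mul_comm] using hfX_mom
  · simp only [hfY a ha y, GaussianChannel.integral_withDensity_ofReal hnonneg hmeas, smul_eq_mul]
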